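/- arXiv:math/9511203 — 2 statements merged into one kernel-verified Lean document; each statement's English description precedes it below -/
import Mathlib

section
/- For every compact K ⊂ ℝ there exist constants C < ∞ and γ₀ < ∞ such that for all s ∈ K and all γ ∈ ℝ with |γ| ≥ γ₀, writing ζ = s + iγ, every twice continuously differentiable function g : I → ℂ satisfying H_ζ g = 0 on I obeys γ²·‖g‖²_{L²(I)} + ‖g′‖²_{L²(I)} ≤ C·|γ|·|g(−r)|² + C·|γ|·|g(r)|². -/
open MeasureTheory Set

/-- The ordinary differential operator `H_ζ` acting on functions on `ℝ`:
`(H_ζ f)(x) = f″(x) + (β₁(x)+β₂(x))·f′(x)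
  + (ζ²·a(x)² − iζ·a′(x) + iζ·a(x)·(β₁(x)−β₂(x)) + β₃(x))·f(x)`. -/
noncomputable def Hop (a : ℝ → ℝ) (β₁ β₂ β₃ : ℝ → ℂ) (ζ : ℂ) (f : ℝ → ℂ) (x : ℝ) : ℂ :=
  deriv (deriv f) x + (β₁ x + β₂ x) * deriv f x +
    (ζ ^ 2 * (Complex.ofReal (a x)) ^ 2 - Complex.I * ζ * Complex.ofReal (deriv a x)
      + Complex.I * ζ * Complex.ofReal (a x) * (β₁ x - β₂ x) + β₃ x) * f x

/-- The `L²` norm of `f` over the set `J ⊆ ℝ` (w.r.t. Lebesgue measure). -/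
noncomputable def L2 (f : ℝ → ℂ) (J : Set ℝ) : ℝ := (∫ x in J, ‖f x‖ ^ 2) ^ ((1 : ℝ)/2)

/-!
For large `|γ|` the equation `H_ζ g = 0` reads `g'' = γ² a² g + O(‖g'‖ + |γ| ‖g‖)`, so that
`⟪g, g'⟫' ≈ ‖g'‖² + γ² a² ‖g‖²` controls both norms by the boundary values of `⟪g, g'⟫`. These still
involve `g'`. To remove it, subtract from `2 ⟪g, g'⟫` the product of `θ / |γ|` and
`‖g'‖² - γ² a² ‖g‖²`, where `θ` is affine with values `∓1` at the endpoints. The leading terms in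
the derivative of the latter cancel, so this only costs a relative error `O(1 / |γ|)`, while at the
endpoints it produces a term `-‖g'‖² / |γ|` which absorbs `g'`.
-/

open scoped RealInnerProductSpace

/-- The energy density `‖g'‖² + G² ‖g‖²` at frequency `G`, as a function of the values `v = g x` and
`w = g' x`. -/
noncomputable def energyDensity {F : Type*} [Norm F] (G : ℝ) (v w : F) : ℝ :=
  ‖w‖ ^ 2 + G ^ 2 * ‖v‖ ^ 2

section Virial

variable {F : Type*} [NormedAddCommGroup F] [InnerProductSpace ℝ F]

/-- The virial `2 ⟪g, g'⟫` of a solution of `g'' ≈ G² a² g`, corrected by a multiplier `θ`, as a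
function of the values `α = a x`, `v = g x` and `w = g' x`. Its derivative controls the energy
density, and where `|θ| = 1` the multiplier term absorbs `g'`. -/
noncomputable def virial (G θ α : ℝ) (v w : F) : ℝ :=
  2 * ⟪v, w⟫ - θ / G * (‖w‖ ^ 2 - G ^ 2 * α ^ 2 * ‖v‖ ^ 2)

/-- The part of the derivative of `virial` which is small compared with the energy density. The
arguments `θ'` and `α'` are the derivatives of `θ` and `α`, and `ρ` is the residual
`g'' - G² a² g`. -/
noncomputable def virialRemainder (G θ θ' α α' : ℝ) (v w ρ : F) : ℝ :=
  2 * ⟪v, ρ⟫ - θ' / G * (‖w‖ ^ 2 - G ^ 2 * α ^ 2 * ‖v‖ ^ 2)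
    - θ / G * (2 * ⟪w, ρ⟫ - 2 * (G ^ 2 * (α * α') * ‖v‖ ^ 2))

lemma hasDerivAt_virial {G θ' α' x : ℝ} {θ α : ℝ → ℝ} {v w : ℝ → F} {ρ : F}
    (hθ : HasDerivAt θ θ' x) (hα : HasDerivAt α α' x) (hv : HasDerivAt v (w x) x)
    (hw : HasDerivAt w ((G ^ 2 * α x ^ 2) • v x + ρ) x) :
    HasDerivAt (fun y => virial G (θ y) (α y) (v y) (w y))
      (2 * (‖w x‖ ^ 2 + G ^ 2 * α x ^ 2 * ‖v x‖ ^ 2)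
        + virialRemainder G (θ x) θ' (α x) α' (v x) (w x) ρ) x := by
  refine (((hv.inner ℝ hw).const_mul 2).sub ((hθ.div_const G).mul (hw.norm_sq.sub
    (((hα.pow 2).const_mul (G ^ 2)).mul hv.norm_sq)))).congr_deriv ?_
  simp only [virialRemainder, inner_add_right, real_inner_smul_right, real_inner_self_eq_norm_sq,
    real_inner_comm (v x) (w x), Nat.cast_ofNat, Nat.add_one_sub_one, pow_one, Pi.pow_apply,
    Pi.sub_apply, Pi.mul_apply]
  ring

lemma neg_mul_energyDensity_le_virialRemainder {G M L θ θ' α α' : ℝ} {v w ρ : F} (hG : 0 < G)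
    (hM : 0 ≤ M) (hθ : |θ| ≤ 1) (hθ' : 0 ≤ θ') (hα : |α * α'| ≤ L)
    (hρ : ‖ρ‖ ≤ M * (‖w‖ + G * ‖v‖)) :
    -((4 * M + 2 * L + θ') / G * energyDensity G v w) ≤ virialRemainder G θ θ' α α' v w ρ := by
  have hL : 0 ≤ L := (abs_nonneg _).trans hα
  have hvρ : |⟪v, ρ⟫| ≤ M / G * (G * ‖v‖ * (‖w‖ + G * ‖v‖)) := calc
    |⟪v, ρ⟫| ≤ ‖v‖ * (M * (‖w‖ + G * ‖v‖)) := (abs_real_inner_le_norm v ρ).trans (by gcongr)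
    _ = M / G * (G * ‖v‖ * (‖w‖ + G * ‖v‖)) := by field_simp
  have hwρ : |θ / G * ⟪w, ρ⟫| ≤ M / G * (‖w‖ * (‖w‖ + G * ‖v‖)) := calc
    |θ / G * ⟪w, ρ⟫| = |θ| / G * |⟪w, ρ⟫| := by rw [abs_mul, abs_div, abs_of_pos hG]
    _ ≤ 1 / G * (‖w‖ * (M * (‖w‖ + G * ‖v‖))) := by
      gcongr
      exact (abs_real_inner_le_norm w ρ).trans (by gcongr)
    _ = M / G * (‖w‖ * (‖w‖ + G * ‖v‖)) := by ring
  have hαv : |θ / G * (G ^ 2 * (α * α') * ‖v‖ ^ 2)| ≤ L / G * energyDensity G v w := calc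
    |θ / G * (G ^ 2 * (α * α') * ‖v‖ ^ 2)| = |θ| / G * (G ^ 2 * |α * α'| * ‖v‖ ^ 2) := by
      rw [abs_mul, abs_div, abs_of_pos hG, abs_mul, abs_mul (G ^ 2), abs_of_nonneg (sq_nonneg G),
        abs_of_nonneg (sq_nonneg ‖v‖)]
    _ ≤ 1 / G * (G ^ 2 * L * ‖v‖ ^ 2) := by gcongr
    _ = L / G * (0 + G ^ 2 * ‖v‖ ^ 2) := by ring
    _ ≤ L / G * energyDensity G v w := by unfold energyDensity; gcongr; positivity
  have hθw : θ' / G * (‖w‖ ^ 2 - G ^ 2 * α ^ 2 * ‖v‖ ^ 2) ≤ θ' / G * energyDensity G v w := by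
    unfold energyDensity
    gcongr
    have : 0 ≤ G ^ 2 * α ^ 2 * ‖v‖ ^ 2 + G ^ 2 * ‖v‖ ^ 2 := by positivity
    linarith
  have hsq : M / G * (‖w‖ + G * ‖v‖) ^ 2 ≤ M / G * (2 * energyDensity G v w) := by
    unfold energyDensity
    gcongr
    rw [← mul_pow]
    exact add_sq_le
  calc -((4 * M + 2 * L + θ') / G * energyDensity G v w)
      = -(2 * (M / G * (2 * energyDensity G v w))) - θ' / G * energyDensity G v w
        - 2 * (L / G * energyDensity G v w) := by ring
    _ ≤ virialRemainder G θ θ' α α' v w ρ := by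
      unfold virialRemainder
      linarith [neg_le_of_abs_le hvρ, le_of_abs_le hwρ, neg_le_of_abs_le hαv]

lemma mul_virial_le {G θ : ℝ} (hG : 0 < G) (hθ : |θ| = 1) (α : ℝ) (v w : F) :
    θ * virial G θ α v w ≤ (1 + α ^ 2) * G * ‖v‖ ^ 2 := by
  have hinner : θ * ⟪v, w⟫ ≤ ‖v‖ * ‖w‖ := calc
    θ * ⟪v, w⟫ ≤ |θ| * |⟪v, w⟫| := (le_abs_self _).trans (abs_mul _ _).le
    _ ≤ ‖v‖ * ‖w‖ := by rw [hθ, one_mul]; exact abs_real_inner_le_norm v w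
  have hθ2 : θ ^ 2 = 1 := by rw [← sq_abs, hθ, one_pow]
  have hyoung : 0 ≤ (G * ‖v‖ - ‖w‖) ^ 2 / G := by positivity
  calc θ * virial G θ α v w
      = 2 * (θ * ⟪v, w⟫) - θ ^ 2 / G * (‖w‖ ^ 2 - G ^ 2 * α ^ 2 * ‖v‖ ^ 2) := by
        unfold virial; ring
    _ ≤ 2 * (‖v‖ * ‖w‖) - 1 / G * (‖w‖ ^ 2 - G ^ 2 * α ^ 2 * ‖v‖ ^ 2)
          + (G * ‖v‖ - ‖w‖) ^ 2 / G := by rw [hθ2]; linarith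
    _ = (1 + α ^ 2) * G * ‖v‖ ^ 2 := by field_simp; ring

lemma mul_integral_energyDensity_le_virial_sub {l u G M L c : ℝ} {a a' : ℝ → ℝ}
    {g g' ρ : ℝ → F} (hlu : l < u) (hG : 0 < G) (hM : 0 ≤ M) (hc : c ≤ 1)
    (hcG : 4 * M + 2 * L + 2 / (u - l) ≤ c * G) (hac : ContinuousOn a (Icc l u))
    (hgc : ContinuousOn g (Icc l u)) (hgc' : ContinuousOn g' (Icc l u))
    (ha : ∀ x ∈ Ioo l u, HasDerivAt a (a' x) x) (hg : ∀ x ∈ Ioo l u, HasDerivAt g (g' x) x)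
    (hg' : ∀ x ∈ Ioo l u, HasDerivAt g' ((G ^ 2 * a x ^ 2) • g x + ρ x) x)
    (hca : ∀ x ∈ Ioo l u, c ≤ a x ^ 2) (haa' : ∀ x ∈ Ioo l u, |a x * a' x| ≤ L)
    (hρ : ∀ x ∈ Ioo l u, ‖ρ x‖ ≤ M * (‖g' x‖ + G * ‖g x‖)) :
    c * ∫ x in l..u, energyDensity G (g x) (g' x)
      ≤ virial G 1 (a u) (g u) (g' u) - virial G (-1) (a l) (g l) (g' l) := by
  have hlen : 0 < u - l := sub_pos.2 hlu
  let θ : ℝ → ℝ := fun x => (2 * x - (l + u)) / (u - l)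
  have hθl : θ l = -1 := (div_eq_iff hlen.ne').2 (by ring)
  have hθu : θ u = 1 := (div_eq_iff hlen.ne').2 (by ring)
  have hθ : ∀ x, HasDerivAt θ (2 / (u - l)) x := fun x => by
    simpa using (((hasDerivAt_id x).const_mul 2).sub_const (l + u)).div_const (u - l)
  have hθ_le : ∀ x ∈ Ioo l u, |θ x| ≤ 1 := fun x hx => by
    rw [abs_div, abs_of_pos hlen, div_le_one hlen, abs_le]
    constructor <;> linarith [hx.1, hx.2]
  have hvirial : ContinuousOn (fun x => virial G (θ x) (a x) (g x) (g' x)) (Icc l u) := by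
    have : Continuous θ := by fun_prop
    unfold virial; fun_prop
  have henergy : ContinuousOn (fun x => c * energyDensity G (g x) (g' x)) (Icc l u) := by
    unfold energyDensity; fun_prop
  rw [← intervalIntegral.integral_const_mul, ← hθl, ← hθu]
  refine intervalIntegral.integral_le_sub_of_hasDeriv_right_of_le hlu.le hvirial
    (fun x hx => (hasDerivAt_virial (hθ x) (ha x hx) (hg x hx) (hg' x hx)).hasDerivWithinAt)
    henergy.integrableOn_Icc fun x hx => ?_
  have hmain : c * energyDensity G (g x) (g' x)
      ≤ ‖g' x‖ ^ 2 + G ^ 2 * a x ^ 2 * ‖g x‖ ^ 2 := calc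
    _ = c * ‖g' x‖ ^ 2 + G ^ 2 * c * ‖g x‖ ^ 2 := by unfold energyDensity; ring
    _ ≤ 1 * ‖g' x‖ ^ 2 + G ^ 2 * a x ^ 2 * ‖g x‖ ^ 2 := by gcongr; exact hca x hx
    _ = _ := by rw [one_mul]
  have hremainder : -(c * energyDensity G (g x) (g' x))
      ≤ virialRemainder G (θ x) (2 / (u - l)) (a x) (a' x) (g x) (g' x) (ρ x) := by
    refine le_trans (neg_le_neg ?_) (neg_mul_energyDensity_le_virialRemainder hG hM (hθ_le x hx)
      (by positivity) (haa' x hx) (hρ x hx))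
    have : 0 ≤ energyDensity G (g x) (g' x) := by unfold energyDensity; positivity
    gcongr
    exact (div_le_iff₀ hG).2 hcG
  linarith

end Virial

lemma exists_integral_energyDensity_le {F : Type*} [NormedAddCommGroup F] [InnerProductSpace ℝ F]
    {l u M : ℝ} {a : ℝ → ℝ} (hlu : l < u) (ha : ContDiffOn ℝ 1 a (Icc l u))
    (ha0 : ∀ x ∈ Icc l u, a x ≠ 0) (hM : 0 ≤ M) :
    ∃ C G₀ : ℝ, ∀ G, G₀ ≤ G → ∀ g g' g'' : ℝ → F,
      ContinuousOn g (Icc l u) → ContinuousOn g' (Icc l u) →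
      (∀ x ∈ Ioo l u, HasDerivAt g (g' x) x) → (∀ x ∈ Ioo l u, HasDerivAt g' (g'' x) x) →
      (∀ x ∈ Ioo l u, ‖g'' x - (G ^ 2 * a x ^ 2) • g x‖ ≤ M * (‖g' x‖ + G * ‖g x‖)) →
      ∫ x in l..u, energyDensity G (g x) (g' x) ≤ C * G * (‖g l‖ ^ 2 + ‖g u‖ ^ 2) := by
  have hac := ha.continuousOn
  obtain ⟨c₀, hc₀, hca⟩ := isCompact_Icc.exists_forall_le' (hac.pow 2)
    fun x hx => sq_pos_of_ne_zero (ha0 x hx)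
  obtain ⟨A, hA⟩ := isCompact_Icc.exists_bound_of_continuousOn (hac.pow 2)
  obtain ⟨L, hL⟩ := isCompact_Icc.exists_bound_of_continuousOn
    (hac.mul (ha.continuousOn_derivWithin (uniqueDiffOn_Icc hlu) le_rfl))
  set c := min c₀ 1
  have hc : 0 < c := lt_min hc₀ one_pos
  refine ⟨(1 + A) / c, max 1 ((4 * M + 2 * L + 2 / (u - l)) / c),
    fun G hG g g' g'' hgc hgc' hg hg' hres => ?_⟩
  have hG0 : 0 < G := one_pos.trans_le ((le_max_left _ _).trans hG)
  have hcG : 4 * M + 2 * L + 2 / (u - l) ≤ c * G :=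
    (div_le_iff₀' hc).1 ((le_max_right _ _).trans hG)
  have hvirial := mul_integral_energyDensity_le_virial_sub
    (ρ := fun x => g'' x - (G ^ 2 * a x ^ 2) • g x) hlu hG0 hM (min_le_right _ _) hcG hac hgc hgc'
    (fun x hx => (ha.differentiableOn one_ne_zero x
      (Ioo_subset_Icc_self hx)).hasDerivWithinAt.hasDerivAt (Icc_mem_nhds hx.1 hx.2)) hg
    (fun x hx => (hg' x hx).congr_deriv (add_sub_cancel _ _).symm)
    (fun x hx => (min_le_left _ _).trans (hca x (Ioo_subset_Icc_self hx)))
    (fun x hx => hL x (Ioo_subset_Icc_self hx)) hres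
  have hboundary : ∀ θ : ℝ, |θ| = 1 → ∀ x ∈ Icc l u,
      θ * virial G θ (a x) (g x) (g' x) ≤ (1 + A) * G * ‖g x‖ ^ 2 := fun θ hθ x hx =>
    (mul_virial_le hG0 hθ _ _ _).trans (by gcongr; exact (le_abs_self _).trans (hA x hx))
  have hu := hboundary 1 (by simp) u (right_mem_Icc.2 hlu.le)
  have hl := hboundary (-1) (by simp) l (left_mem_Icc.2 hlu.le)
  rw [div_mul_eq_mul_div, div_mul_eq_mul_div, le_div_iff₀' hc]
  linarith

section Residual

lemma norm_mk_le_mul_abs {s γ S : ℝ} (hs : |s| ≤ S) (hγ : 1 ≤ |γ|) :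
    ‖Complex.mk s γ‖ ≤ (S + 1) * |γ| := by
  have hS : 0 ≤ S := (abs_nonneg s).trans hs
  calc ‖Complex.mk s γ‖ ≤ |s| + |γ| := Complex.norm_le_abs_re_add_abs_im _
    _ ≤ S * |γ| + |γ| := by gcongr; exact hs.trans (le_mul_of_one_le_right hS hγ)
    _ = (S + 1) * |γ| := by ring

lemma norm_mk_sq_add_sq_le_mul_abs {s γ S : ℝ} (hs : |s| ≤ S) (hγ : 1 ≤ |γ|) :
    ‖Complex.mk s γ ^ 2 + (γ : ℂ) ^ 2‖ ≤ S * (S + 2) * |γ| := by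
  have hS : 0 ≤ S := (abs_nonneg s).trans hs
  have hfactor : Complex.mk s γ ^ 2 + (γ : ℂ) ^ 2 = s * (Complex.mk s γ + γ * Complex.I) := by
    rw [Complex.mk_eq_add_mul_I]
    linear_combination (γ : ℂ) ^ 2 * Complex.I_sq
  have hsum : ‖Complex.mk s γ + γ * Complex.I‖ ≤ (S + 1) * |γ| + |γ| := by
    refine (norm_add_le _ _).trans (add_le_add (norm_mk_le_mul_abs hs hγ) ?_)
    simp
  calc ‖Complex.mk s γ ^ 2 + (γ : ℂ) ^ 2‖ = |s| * ‖Complex.mk s γ + γ * Complex.I‖ := by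
        rw [hfactor, norm_mul, Complex.norm_real, Real.norm_eq_abs]
    _ ≤ S * ((S + 1) * |γ| + |γ|) := by gcongr
    _ = S * (S + 2) * |γ| := by ring

variable {a : ℝ → ℝ} {β₁ β₂ β₃ : ℝ → ℂ}

lemma norm_deriv_deriv_sub_le_of_Hop_eq_zero {s γ S A B D E x : ℝ} {g : ℝ → ℂ} (hs : |s| ≤ S)
    (hγ : 1 ≤ |γ|) (hA : ‖(a x : ℂ) ^ 2‖ ≤ A) (hB : ‖β₁ x + β₂ x‖ ≤ B)
    (hD : ‖a x * (β₁ x - β₂ x) - deriv a x‖ ≤ D) (hE : ‖β₃ x‖ ≤ E)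
    (h : Hop a β₁ β₂ β₃ (Complex.mk s γ) g x = 0) :
    ‖deriv (deriv g) x - (γ ^ 2 * a x ^ 2) • g x‖
      ≤ B * ‖deriv g x‖ + (S * (S + 2) * A + (S + 1) * D + E) * |γ| * ‖g x‖ := by
  have hS : 0 ≤ S := (abs_nonneg s).trans hs
  have hE0 : 0 ≤ E := (norm_nonneg _).trans hE
  set ζ := Complex.mk s γ
  set V := (ζ ^ 2 + (γ : ℂ) ^ 2) * (a x : ℂ) ^ 2
    + Complex.I * ζ * (a x * (β₁ x - β₂ x) - deriv a x) + β₃ x with hV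
  have hVle : ‖V‖ ≤ (S * (S + 2) * A + (S + 1) * D + E) * |γ| := calc
    ‖V‖ ≤ ‖ζ ^ 2 + (γ : ℂ) ^ 2‖ * ‖(a x : ℂ) ^ 2‖
        + ‖ζ‖ * ‖a x * (β₁ x - β₂ x) - deriv a x‖ + ‖β₃ x‖ := by
      refine norm_add₃_le.trans_eq ?_
      rw [norm_mul, norm_mul, norm_mul, Complex.norm_I, one_mul]
    _ ≤ S * (S + 2) * |γ| * A + (S + 1) * |γ| * D + E * |γ| := by
      gcongr
      · exact norm_mk_sq_add_sq_le_mul_abs hs hγ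
      · exact norm_mk_le_mul_abs hs hγ
      · exact hE.trans (le_mul_of_one_le_right hE0 hγ)
    _ = _ := by ring
  have hres : deriv (deriv g) x - (γ ^ 2 * a x ^ 2) • g x
      = -((β₁ x + β₂ x) * deriv g x + V * g x) := by
    rw [Hop] at h
    rw [Complex.real_smul, hV]
    push_cast
    linear_combination h
  rw [hres, norm_neg]
  refine (norm_add_le _ _).trans ?_
  rw [norm_mul, norm_mul]
  gcongr

lemma exists_norm_deriv_deriv_sub_le_of_Hop_eq_zero {l u : ℝ} {K : Set ℝ} (hlu : l < u)
    (ha : ContDiffOn ℝ 1 a (Icc l u)) (hβ₁ : ContinuousOn β₁ (Icc l u))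
    (hβ₂ : ContinuousOn β₂ (Icc l u)) (hβ₃ : ContinuousOn β₃ (Icc l u))
    (hK : Bornology.IsBounded K) :
    ∃ M, 0 ≤ M ∧ ∀ s ∈ K, ∀ γ : ℝ, 1 ≤ |γ| → ∀ g : ℝ → ℂ, ∀ x ∈ Ioo l u,
      Hop a β₁ β₂ β₃ (Complex.mk s γ) g x = 0 →
        ‖deriv (deriv g) x - (γ ^ 2 * a x ^ 2) • g x‖ ≤ M * (‖deriv g x‖ + |γ| * ‖g x‖) := by
  have hac : ContinuousOn (fun x => (a x : ℂ)) (Icc l u) :=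
    Complex.continuous_ofReal.comp_continuousOn ha.continuousOn
  have hac' : ContinuousOn (fun x => ((derivWithin a (Icc l u) x : ℝ) : ℂ)) (Icc l u) :=
    Complex.continuous_ofReal.comp_continuousOn
      (ha.continuousOn_derivWithin (uniqueDiffOn_Icc hlu) le_rfl)
  obtain ⟨S, hS⟩ := hK.exists_norm_le
  obtain ⟨A, hA⟩ := isCompact_Icc.exists_bound_of_continuousOn (hac.pow 2)
  obtain ⟨B, hB⟩ := isCompact_Icc.exists_bound_of_continuousOn (hβ₁.add hβ₂)
  obtain ⟨D, hD⟩ := isCompact_Icc.exists_bound_of_continuousOn ((hac.mul (hβ₁.sub hβ₂)).sub hac')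
  obtain ⟨E, hE⟩ := isCompact_Icc.exists_bound_of_continuousOn hβ₃
  set P := S * (S + 2) * A + (S + 1) * D + E
  refine ⟨max 0 (max B P), le_max_left _ _, fun s hs γ hγ g x hx h => ?_⟩
  have hxI := Ioo_subset_Icc_self hx
  have hDx : ‖a x * (β₁ x - β₂ x) - deriv a x‖ ≤ D := by
    rw [← derivWithin_of_mem_nhds (Icc_mem_nhds hx.1 hx.2)]
    exact hD x hxI
  calc _ ≤ B * ‖deriv g x‖ + P * |γ| * ‖g x‖ :=
        norm_deriv_deriv_sub_le_of_Hop_eq_zero (hS s hs) hγ (hA x hxI) (hB x hxI) hDx (hE x hxI) h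
    _ ≤ max 0 (max B P) * ‖deriv g x‖ + max 0 (max B P) * |γ| * ‖g x‖ := by
        gcongr
        · exact (le_max_left _ _).trans (le_max_right _ _)
        · exact (le_max_right _ _).trans (le_max_right _ _)
    _ = _ := by ring

end Residual

section L2

lemma L2_sq (f : ℝ → ℂ) (J : Set ℝ) : L2 f J ^ 2 = ∫ x in J, ‖f x‖ ^ 2 := by
  rw [L2, ← Real.sqrt_eq_rpow, Real.sq_sqrt (integral_nonneg fun x => sq_nonneg ‖f x‖)]

lemma L2_derivWithin_Icc (g : ℝ → ℂ) (l u : ℝ) :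
    L2 (derivWithin g (Icc l u)) (Icc l u) = L2 (deriv g) (Icc l u) := by
  simp only [L2, integral_Icc_eq_integral_Ioo]
  congr 1
  refine setIntegral_congr_fun measurableSet_Ioo fun x hx => ?_
  simp only [derivWithin_of_mem_nhds (Icc_mem_nhds hx.1 hx.2)]

lemma integral_energyDensity_eq_L2 {l u : ℝ} {f h : ℝ → ℂ} (hlu : l ≤ u)
    (hf : ContinuousOn f (Icc l u)) (hh : ContinuousOn h (Icc l u)) (G : ℝ) :
    ∫ x in l..u, energyDensity G (f x) (h x)
      = G ^ 2 * L2 f (Icc l u) ^ 2 + L2 h (Icc l u) ^ 2 := by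
  rw [intervalIntegral.integral_of_le hlu, ← integral_Icc_eq_integral_Ioc, L2_sq, L2_sq]
  simp only [energyDensity]
  rw [integral_add (ContinuousOn.integrableOn_Icc (by fun_prop))
    (ContinuousOn.integrableOn_Icc (by fun_prop)), integral_const_mul, add_comm]

end L2

theorem boundary_estimate_general {l u : ℝ} {a : ℝ → ℝ} {β₁ β₂ β₃ : ℝ → ℂ} {K : Set ℝ}
    (hlu : l < u) (ha : ContDiffOn ℝ 1 a (Icc l u)) (ha0 : ∀ x ∈ Icc l u, a x ≠ 0)
    (hβ₁ : ContinuousOn β₁ (Icc l u)) (hβ₂ : ContinuousOn β₂ (Icc l u))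
    (hβ₃ : ContinuousOn β₃ (Icc l u)) (hK : Bornology.IsBounded K) :
    ∃ C : ℝ, ∃ γ₀ : ℝ, ∀ s ∈ K, ∀ γ : ℝ, γ₀ ≤ |γ| →
      ∀ g : ℝ → ℂ, ContDiffOn ℝ 2 g (Icc l u) →
        (∀ x ∈ Ioo l u, Hop a β₁ β₂ β₃ (Complex.mk s γ) g x = 0) →
        γ ^ 2 * L2 g (Icc l u) ^ 2 + L2 (deriv g) (Icc l u) ^ 2
          ≤ C * |γ| * ‖g l‖ ^ 2 + C * |γ| * ‖g u‖ ^ 2 := by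
  obtain ⟨M, hM, hres⟩ := exists_norm_deriv_deriv_sub_le_of_Hop_eq_zero hlu ha hβ₁ hβ₂ hβ₃ hK
  obtain ⟨C, G₀, hC⟩ := exists_integral_energyDensity_le (F := ℂ) hlu ha ha0 hM
  refine ⟨C, max 1 G₀, fun s hs γ hγ g hg hode => ?_⟩
  have hgc' : ContinuousOn (derivWithin g (Icc l u)) (Icc l u) :=
    hg.continuousOn_derivWithin (uniqueDiffOn_Icc hlu) one_le_two
  have hinterior : ∀ x ∈ Ioo l u, derivWithin g (Icc l u) x = deriv g x := fun x hx =>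
    derivWithin_of_mem_nhds (Icc_mem_nhds hx.1 hx.2)
  have hgI : ContDiffOn ℝ 2 g (Ioo l u) := hg.mono Ioo_subset_Icc_self
  have hdg : DifferentiableOn ℝ (deriv g) (Ioo l u) :=
    (hgI.deriv_of_isOpen isOpen_Ioo (m := 1) one_add_one_eq_two.le).differentiableOn one_ne_zero
  have henergy := hC |γ| ((le_max_right _ _).trans hγ) g (derivWithin g (Icc l u)) (deriv (deriv g))
    hg.continuousOn hgc'
    (fun x hx => hinterior x hx ▸
      (hgI.differentiableOn two_ne_zero).hasDerivAt (isOpen_Ioo.mem_nhds hx))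
    (fun x hx => (hdg.hasDerivAt (isOpen_Ioo.mem_nhds hx)).congr_of_eventuallyEq
      (Filter.eventuallyEq_of_mem (isOpen_Ioo.mem_nhds hx) hinterior))
    (fun x hx => by
      rw [sq_abs, hinterior x hx]
      exact hres s hs γ ((le_max_left _ _).trans hγ) g x hx (hode x hx))
  rw [integral_energyDensity_eq_L2 hlu.le hg.continuousOn hgc', L2_derivWithin_Icc, sq_abs,
    mul_add] at henergy
  exact henergy

/-- For `s` in a compact set and `|γ|` large, solutions of `H_ζ g = 0` on `I`,
`ζ = s + iγ`, satisfy `γ²‖g‖² + ‖g′‖² ≤ C|γ||g(-r)|² + C|γ||g(r)|²`. -/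
theorem boundary_estimate (r : ℝ) (hr : 0 < r) (a : ℝ → ℝ) (ha : ContDiff ℝ (⊤ : ℕ∞) a)
    (ha0 : ∀ x ∈ Icc (-r) r, a x ≠ 0)
    (β₁ β₂ β₃ : ℝ → ℂ) (hβ₁ : ContDiff ℝ (⊤ : ℕ∞) β₁) (hβ₂ : ContDiff ℝ (⊤ : ℕ∞) β₂)
    (hβ₃ : ContDiff ℝ (⊤ : ℕ∞) β₃)
    (K : Set ℝ) (hK : IsCompact K) :
    ∃ C : ℝ, ∃ γ₀ : ℝ, ∀ s ∈ K, ∀ γ : ℝ, γ₀ ≤ |γ| →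
      ∀ g : ℝ → ℂ, ContDiff ℝ 2 g →
        (∀ x ∈ Icc (-r) r, Hop a β₁ β₂ β₃ (Complex.mk s γ) g x = 0) →
        γ ^ 2 * L2 g (Icc (-r) r) ^ 2 + L2 (deriv g) (Icc (-r) r) ^ 2
          ≤ C * |γ| * ‖g (-r)‖ ^ 2 + C * |γ| * ‖g r‖ ^ 2 := by
  obtain ⟨C, γ₀, h⟩ := boundary_estimate_general (l := -r) (u := r) (by linarith)
    (ha.of_le (mod_cast le_top)).contDiffOn ha0
    hβ₁.continuous.continuousOn hβ₂.continuous.continuousOn hβ₃.continuous.continuousOn hK.isBounded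
  exact ⟨C, γ₀, fun s hs γ hγ g hg hode => h s hs γ hγ g hg.contDiffOn
    fun x hx => hode x (Ioo_subset_Icc_self hx)⟩
end

section
/- For every compact subset K of [0, ∞), the set {s ∈ K : there exists γ ∈ ℝ with s − 1/2 + iγ ∈ 𝔖} is finite. -/
open MeasureTheory Set

/-- The set `𝔖` of `ζ ∈ ℂ` for which the Dirichlet problem `H_ζ g = 0` on `I = [-r,r]`,
`g(-r) = g(r) = 0`, has a nontrivial solution. -/
def frakS (r : ℝ) (a : ℝ → ℝ) (β₁ β₂ β₃ : ℝ → ℂ) : Set ℂ :=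
  {ζ : ℂ | ∃ g : ℝ → ℂ, ContDiff ℝ 2 g ∧ (∃ x ∈ Icc (-r) r, g x ≠ 0) ∧
    (∀ x ∈ Icc (-r) r, Hop a β₁ β₂ β₃ ζ g x = 0) ∧ g (-r) = 0 ∧ g r = 0}

/-!
The Volterra operator `V_A f = ∫ A f` of a linear system `y' = A y` is quasinilpotent, so the
solution `y = (1 - V_A)⁻¹ y₀` depends holomorphically on `A`. Hence the value `D(ζ)` at `r` of the
solution of `H_ζ g = 0` with `g(-r) = 0`, `g'(-r) = 1` is an entire function of `ζ`, and it vanishes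
on `𝔖`.

For `ζ` in a vertical strip with `|Im ζ|` large, the term `ζ² a²` makes the real part of the zeroth
order coefficient of `H_ζ` very negative. Then `Re (conj g * g')` has positive derivative wherever
`g ≠ 0`; as it vanishes at both ends, a solution of the Dirichlet problem is zero, and `D(ζ) ≠ 0`.
Thus `D` is not identically zero, and its zeros in the strip lie in a compact rectangle.
-/

theorem isUnit_one_sub_of_norm_pow_lt_one {R : Type*} [NormedRing R] [HasSummableGeomSeries R]
    {x : R} {n : ℕ} (h : ‖x ^ n‖ < 1) : IsUnit (1 - x) := by
  have hcomm : Commute (1 - x) (∑ i ∈ Finset.range n, x ^ i) :=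
    (mul_neg_geom_sum x n).trans (geom_sum_mul_neg x n).symm
  have hunit : IsUnit ((1 - x) * ∑ i ∈ Finset.range n, x ^ i) := by
    rw [mul_neg_geom_sum]
    exact isUnit_one_sub_of_norm_lt_one h
  exact (hcomm.isUnit_mul_iff.1 hunit).1

theorem differentiableAt_inverse_one_sub_apply {𝕜 E G : Type*} [NontriviallyNormedField 𝕜]
    [NormedAddCommGroup E] [NormedSpace 𝕜 E] [NormedAddCommGroup G] [NormedSpace 𝕜 G]
    [CompleteSpace G] (L : E →L[𝕜] G →L[𝕜] G) {x : E} (hx : IsUnit (1 - L x)) (v : G) :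
    DifferentiableAt 𝕜 (fun x => Ring.inverse (1 - L x) v) x := by
  have hL : DifferentiableAt 𝕜 (fun x => 1 - L x) x := by fun_prop
  exact ((differentiableAt_inverse (R := G →L[𝕜] G) hx).fun_comp' x hL).clm_apply
    (differentiableAt_const v)

section LinearODE

variable {𝕜 F : Type*} [NontriviallyNormedField 𝕜] [NormedAddCommGroup F] [NormedSpace 𝕜 F]
  {l u : ℝ} (h : l ≤ u)

theorem continuous_IccExtend_clm_apply (A : C(Icc l u, F →L[𝕜] F)) (f : C(Icc l u, F)) :
    Continuous fun t => IccExtend h A t (IccExtend h f t) :=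
  A.continuous.Icc_extend'.clm_apply f.continuous.Icc_extend'

variable [NormedSpace ℝ F]

theorem norm_intervalIntegral_IccExtend_clm_apply_le (A : C(Icc l u, F →L[𝕜] F))
    (f : C(Icc l u, F)) (x : Icc l u) :
    ‖∫ t in l..x, IccExtend h A t (IccExtend h f t)‖ ≤ (u - l) * ‖A‖ * ‖f‖ := by
  have hbound : ∀ t, ‖IccExtend h A t (IccExtend h f t)‖ ≤ ‖A‖ * ‖f‖ := fun t =>
    (IccExtend h A t).le_of_opNorm_le_of_le (A.norm_coe_le_norm _) (f.norm_coe_le_norm _)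
  calc ‖∫ t in l..x, IccExtend h A t (IccExtend h f t)‖
      ≤ ‖A‖ * ‖f‖ * |(x : ℝ) - l| :=
        intervalIntegral.norm_integral_le_of_norm_le_const fun t _ => hbound t
    _ ≤ ‖A‖ * ‖f‖ * (u - l) := by
        rw [abs_of_nonneg (sub_nonneg.2 x.2.1)]
        gcongr
        exact x.2.2
    _ = (u - l) * ‖A‖ * ‖f‖ := by ring

variable [SMulCommClass ℝ 𝕜 F]

/-- The Volterra operator `f ↦ (x ↦ ∫ t in l..x, A t (f t))` on continuous functions on `[l, u]`,
as a bounded bilinear map in the coefficient `A` and in `f`. A continuous function `y` solves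
`y' = A y`, `y l = y₀` if and only if `y = y₀ + volterra h A y`. -/
noncomputable def volterra :
    C(Icc l u, F →L[𝕜] F) →L[𝕜] C(Icc l u, F) →L[𝕜] C(Icc l u, F) :=
  LinearMap.mkContinuous₂
    (LinearMap.mk₂ 𝕜
      (fun A f => ⟨fun x => ∫ t in l..x, IccExtend h A t (IccExtend h f t),
        (intervalIntegral.continuous_primitive
          (continuous_IccExtend_clm_apply h A f).intervalIntegrable l).comp
          continuous_subtype_val⟩)
      (fun A B f => ContinuousMap.ext fun _ => intervalIntegral.integral_add
        ((continuous_IccExtend_clm_apply h A f).intervalIntegrable _ _)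
        ((continuous_IccExtend_clm_apply h B f).intervalIntegrable _ _))
      (fun c A f => ContinuousMap.ext fun _ => intervalIntegral.integral_smul c _)
      (fun A f g => ContinuousMap.ext fun _ => by
        simpa [IccExtend, Function.comp_def] using intervalIntegral.integral_add
          ((continuous_IccExtend_clm_apply h A f).intervalIntegrable _ _)
          ((continuous_IccExtend_clm_apply h A g).intervalIntegrable _ _))
      (fun c A f => ContinuousMap.ext fun _ => by
        simp [IccExtend]))
    (u - l)
    (fun A f => (ContinuousMap.norm_le _ (by have := sub_nonneg.2 h; positivity)).2
      (norm_intervalIntegral_IccExtend_clm_apply_le h A f))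

theorem volterra_apply (A : C(Icc l u, F →L[𝕜] F)) (f : C(Icc l u, F)) (x : Icc l u) :
    volterra h A f x = ∫ t in l..x, IccExtend h A t (IccExtend h f t) := rfl

theorem norm_volterra_apply_le (A : C(Icc l u, F →L[𝕜] F)) {f : C(Icc l u, F)} {M : ℝ} {n : ℕ}
    (hf : ∀ x : Icc l u, ‖f x‖ ≤ M * (x - l) ^ n / n.factorial) (x : Icc l u) :
    ‖volterra h A f x‖ ≤ ‖A‖ * M * (x - l) ^ (n + 1) / (n + 1).factorial := by
  have hint : ∫ t in l..(x : ℝ), ‖A‖ * M * (t - l) ^ n / n.factorial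
      = ‖A‖ * M * (x - l) ^ (n + 1) / (n + 1).factorial := by
    rw [intervalIntegral.integral_div, intervalIntegral.integral_const_mul,
      intervalIntegral.integral_comp_sub_right (fun t => t ^ n), integral_pow, Nat.factorial_succ]
    rw [sub_self, zero_pow n.succ_ne_zero, sub_zero]
    push_cast
    field_simp
  rw [volterra_apply, ← hint]
  refine intervalIntegral.norm_integral_le_of_norm_le x.2.1 (Filter.Eventually.of_forall ?_)
    (Continuous.intervalIntegrable (by fun_prop) _ _)
  intro t ht
  have hmem : t ∈ Icc l u := ⟨ht.1.le, ht.2.trans x.2.2⟩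
  rw [IccExtend_of_mem h A hmem, IccExtend_of_mem h f hmem, mul_assoc, mul_div_assoc]
  exact (A ⟨t, hmem⟩).le_of_opNorm_le_of_le (A.norm_coe_le_norm _) (hf ⟨t, hmem⟩)

theorem norm_volterra_pow_apply_le (A : C(Icc l u, F →L[𝕜] F)) (f : C(Icc l u, F)) (n : ℕ)
    (x : Icc l u) :
    ‖(volterra h A ^ n) f x‖ ≤ ‖A‖ ^ n * ‖f‖ * (x - l) ^ n / n.factorial := by
  induction n generalizing x with
  | zero => simpa using f.norm_coe_le_norm x
  | succ n ih =>
    rw [pow_succ', pow_succ' ‖A‖, mul_assoc ‖A‖]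
    exact norm_volterra_apply_le h A ih x

theorem norm_volterra_pow_le (A : C(Icc l u, F →L[𝕜] F)) (n : ℕ) :
    ‖volterra h A ^ n‖ ≤ (‖A‖ * (u - l)) ^ n / n.factorial := by
  have : 0 ≤ u - l := sub_nonneg.2 h
  refine ContinuousLinearMap.opNorm_le_bound _ (by positivity) fun f => ?_
  refine (ContinuousMap.norm_le _ (by positivity)).2 fun x => ?_
  have hx : 0 ≤ (x : ℝ) - l := sub_nonneg.2 x.2.1
  calc ‖(volterra h A ^ n) f x‖
      ≤ ‖A‖ ^ n * ‖f‖ * (x - l) ^ n / n.factorial := norm_volterra_pow_apply_le h A f n x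
    _ ≤ ‖A‖ ^ n * ‖f‖ * (u - l) ^ n / n.factorial := by
        gcongr
        exact x.2.2
    _ = (‖A‖ * (u - l)) ^ n / n.factorial * ‖f‖ := by
        rw [mul_pow]
        ring

/-- The solution on `[l, u]` of the linear initial value problem `y' = A y`, `y l = y₀`. For
complete `F` the operator `1 - volterra h A` is invertible, so `Ring.inverse` is an inverse. -/
noncomputable def linearODESolution (A : C(Icc l u, F →L[𝕜] F)) (y₀ : F) : C(Icc l u, F) :=
  Ring.inverse (1 - volterra h A) (ContinuousMap.const _ y₀)

theorem linearODESolution_smul (A : C(Icc l u, F →L[𝕜] F)) (c : 𝕜) (y₀ : F) :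
    linearODESolution h A (c • y₀) = c • linearODESolution h A y₀ :=
  map_smul (Ring.inverse (1 - volterra h A)) c (ContinuousMap.const _ y₀)

variable [CompleteSpace F]

theorem isUnit_one_sub_volterra (A : C(Icc l u, F →L[𝕜] F)) : IsUnit (1 - volterra h A) := by
  obtain ⟨n, hn⟩ := ((FloorSemiring.tendsto_pow_div_factorial_atTop
    (‖A‖ * (u - l))).eventually (gt_mem_nhds one_pos)).exists
  exact isUnit_one_sub_of_norm_pow_lt_one (R := C(Icc l u, F) →L[𝕜] C(Icc l u, F))
    ((norm_volterra_pow_le h A n).trans_lt hn)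

theorem eq_linearODESolution_iff {A : C(Icc l u, F →L[𝕜] F)} {y₀ : F} {y : C(Icc l u, F)} :
    y = linearODESolution h A y₀ ↔
      ∀ x : Icc l u, y x = y₀ + ∫ t in l..x, IccExtend h A t (IccExtend h y t) := by
  have hunit := isUnit_one_sub_volterra h A
  have hfix : y = linearODESolution h A y₀ ↔
      (1 - volterra h A) y = ContinuousMap.const _ y₀ := by
    constructor
    · rintro rfl
      exact DFunLike.congr_fun (Ring.mul_inverse_cancel _ hunit) (ContinuousMap.const _ y₀)
    · intro hy
      rw [linearODESolution, ← hy]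
      exact (DFunLike.congr_fun (Ring.inverse_mul_cancel _ hunit) y).symm
  rw [hfix, ContinuousMap.ext_iff]
  exact forall_congr' fun x => sub_eq_iff_eq_add

theorem linearODESolution_apply (A : C(Icc l u, F →L[𝕜] F)) (y₀ : F) (x : Icc l u) :
    linearODESolution h A y₀ x = y₀ + ∫ t in l..x,
      IccExtend h A t (IccExtend h (linearODESolution h A y₀) t) :=
  (eq_linearODESolution_iff h).1 rfl x

theorem linearODESolution_left (A : C(Icc l u, F →L[𝕜] F)) (y₀ : F) :
    linearODESolution h A y₀ ⟨l, left_mem_Icc.2 h⟩ = y₀ := by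
  simp [linearODESolution_apply h A y₀ ⟨l, left_mem_Icc.2 h⟩]

theorem hasDerivAt_IccExtend_linearODESolution (A : C(Icc l u, F →L[𝕜] F)) (y₀ : F) {x : ℝ}
    (hx : x ∈ Ioo l u) :
    HasDerivAt (IccExtend h (linearODESolution h A y₀))
      (IccExtend h A x (IccExtend h (linearODESolution h A y₀) x)) x := by
  have hint := ((continuous_IccExtend_clm_apply h A (linearODESolution h A y₀)
    ).integral_hasStrictDerivAt l x).hasDerivAt.const_add y₀
  refine hint.congr_of_eventuallyEq ?_
  filter_upwards [Icc_mem_nhds hx.1 hx.2] with t ht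
  rw [IccExtend_of_mem h _ ht, linearODESolution_apply]

theorem eqOn_IccExtend_linearODESolution {A : C(Icc l u, F →L[𝕜] F)} {y : ℝ → F}
    (hy : ContinuousOn y (Icc l u))
    (hderiv : ∀ x ∈ Ioo l u, HasDerivAt y (IccExtend h A x (y x)) x) :
    EqOn y (IccExtend h (linearODESolution h A (y l))) (Icc l u) := by
  let f : C(Icc l u, F) := ⟨(Icc l u).domRestrict y, hy.domRestrict⟩
  have hfy : ∀ {t}, t ∈ Icc l u → IccExtend h f t = y t := fun ht => IccExtend_of_mem h f ht
  suffices hf : f = linearODESolution h A (y l) from fun x hx => by rw [← hf, hfy hx]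
  refine (eq_linearODESolution_iff h).2 fun x => ?_
  rw [intervalIntegral.integral_eq_sub_of_hasDerivAt_of_le (f := y) x.2.1
    (hy.mono (Icc_subset_Icc_right x.2.2)) _
    ((continuous_IccExtend_clm_apply h A f).intervalIntegrable _ _)]
  · exact (add_sub_cancel (y l) (y x)).symm
  · intro t ht
    have htu : t < u := ht.2.trans_le x.2.2
    rw [hfy ⟨ht.1.le, htu.le⟩]
    exact hderiv t ⟨ht.1, htu⟩

theorem differentiable_linearODESolution (y₀ : F) :
    Differentiable 𝕜 fun A : C(Icc l u, F →L[𝕜] F) => linearODESolution h A y₀ := fun A =>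
  differentiableAt_inverse_one_sub_apply (E := C(Icc l u, F →L[𝕜] F)) (G := C(Icc l u, F))
    (volterra h) (isUnit_one_sub_volterra h A) _

end LinearODE

section Dirichlet

/-- The coefficient matrix of the first order system in `(g, g')` that is equivalent to
`g'' + b g' + q g = 0`. -/
noncomputable def companion {X : Type*} [TopologicalSpace X] (b q : C(X, ℂ)) :
    C(X, ℂ × ℂ →L[ℂ] ℂ × ℂ) :=
  ⟨fun x => .inl ℂ ℂ ℂ ∘L .snd ℂ ℂ ℂ - b x • (.inr ℂ ℂ ℂ ∘L .snd ℂ ℂ ℂ)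
    - q x • (.inr ℂ ℂ ℂ ∘L .fst ℂ ℂ ℂ), by fun_prop⟩

theorem companion_apply_apply {X : Type*} [TopologicalSpace X] (b q : C(X, ℂ)) (x : X)
    (v : ℂ × ℂ) : companion b q x v = (v.2, -(b x * v.2 + q x * v.1)) := by
  ext
  · simp [companion]
  · simp only [companion, ContinuousMap.coe_mk, sub_apply, ContinuousLinearMap.comp_apply,
      ContinuousLinearMap.coe_snd', ContinuousLinearMap.inl_apply, smul_apply,
      ContinuousLinearMap.inr_apply, Prod.smul_mk, smul_eq_mul, mul_zero, Prod.mk_sub_mk, sub_zero,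
      zero_sub, ContinuousLinearMap.coe_fst', neg_add_rev]
    ring

theorem differentiable_companion {X : Type*} [TopologicalSpace X] [CompactSpace X]
    (b : C(X, ℂ)) : Differentiable ℂ (companion b) := by
  let L : C(X, ℂ) →L[ℂ] C(X, ℂ × ℂ →L[ℂ] ℂ × ℂ) := ContinuousLinearMap.compLeftContinuous ℂ X
    (.toSpanSingleton ℂ (.inr ℂ ℂ ℂ ∘L .fst ℂ ℂ ℂ))
  have haffine : companion b = fun q => companion b 0 - L q := by
    ext q x <;> simp [companion, L]
  rw [haffine]
  exact Differentiable.const_sub (𝕜 := ℂ) (E := C(X, ℂ)) (F := C(X, ℂ × ℂ →L[ℂ] ℂ × ℂ))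
    L.differentiable _

variable {l u : ℝ}

/-- The pair `(g, g')` solves the Dirichlet problem `g'' + b g' + q g = 0` on `[l, u]`,
`g l = g u = 0`. The derivative is a separate function because it is only required to be one in
the interior of the interval. -/
structure IsDirichletSolution (h : l ≤ u) (b q : C(Icc l u, ℂ)) (g g' : ℝ → ℂ) : Prop where
  continuousOn : ContinuousOn g (Icc l u)
  continuousOn_deriv : ContinuousOn g' (Icc l u)
  hasDerivAt : ∀ x ∈ Ioo l u, HasDerivAt g (g' x) x
  hasDerivAt_deriv : ∀ x ∈ Ioo l u,
    HasDerivAt g' (-(IccExtend h b x * g' x + IccExtend h q x * g x)) x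
  left_eq_zero : g l = 0
  right_eq_zero : g u = 0

/-- The characteristic determinant of the Dirichlet problem for `g'' + b g' + q g = 0` on `[l, u]`:
the value at `u` of the solution with `g l = 0` and `g' l = 1`. -/
noncomputable def dirichletDet (h : l ≤ u) (b q : C(Icc l u, ℂ)) : ℂ :=
  (linearODESolution h (companion b q) (0, 1) ⟨u, right_mem_Icc.2 h⟩).1

theorem differentiable_dirichletDet (h : l ≤ u) (b : C(Icc l u, ℂ)) :
    Differentiable ℂ (dirichletDet h b) := by
  have hsol : Differentiable ℂ fun q => linearODESolution h (companion b q) (0, 1) :=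
    (differentiable_linearODESolution (𝕜 := ℂ) (F := ℂ × ℂ) h (0, 1)).comp
      (differentiable_companion b)
  exact ((ContinuousMap.evalCLM ℂ (⟨u, right_mem_Icc.2 h⟩ : Icc l u)).differentiable.comp hsol).fst

variable {h : l ≤ u} {b q : C(Icc l u, ℂ)} {g g' : ℝ → ℂ}

theorem IsDirichletSolution.eqOn_linearODESolution (hg : IsDirichletSolution h b q g g') :
    EqOn (fun x => (g x, g' x))
      (g' l • IccExtend h (linearODESolution h (companion b q) (0, 1))) (Icc l u) := by
  have hsol := eqOn_IccExtend_linearODESolution h (A := companion b q)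
    (hg.continuousOn.prodMk hg.continuousOn_deriv) fun x hx =>
      ((hg.hasDerivAt x hx).prodMk (hg.hasDerivAt_deriv x hx)).congr_deriv
        (companion_apply_apply b q (projIcc l u h x) (g x, g' x)).symm
  have hinit : (g l, g' l) = g' l • ((0, 1) : ℂ × ℂ) := by simp [hg.left_eq_zero]
  rwa [hinit, linearODESolution_smul] at hsol

theorem IsDirichletSolution.dirichletDet_eq_zero (hg : IsDirichletSolution h b q g g') {x : ℝ}
    (hx : x ∈ Icc l u) (hgx : g x ≠ 0) : dirichletDet h b q = 0 := by
  have hsol := fun t ht => congrArg Prod.fst (hg.eqOn_linearODESolution (x := t) ht)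
  simp only [Pi.smul_apply, Prod.smul_fst, smul_eq_mul] at hsol
  have hg'l : g' l ≠ 0 := by
    intro h0
    exact hgx (by rw [hsol x hx, h0, zero_mul])
  have hu := hsol u (right_mem_Icc.2 h)
  rw [hg.right_eq_zero, IccExtend_right] at hu
  exact (mul_eq_zero.1 hu.symm).resolve_left hg'l

theorem exists_isDirichletSolution_of_dirichletDet_eq_zero (hdet : dirichletDet h b q = 0) :
    ∃ g g', IsDirichletSolution h b q g g' ∧ g' l = 1 := by
  set y := IccExtend h (linearODESolution h (companion b q) (0, 1)) with hy
  have hc : Continuous y := (ContinuousMap.continuous _).Icc_extend'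
  have hderiv : ∀ x ∈ Ioo l u, HasDerivAt y
      ((y x).2, -(IccExtend h b x * (y x).2 + IccExtend h q x * (y x).1)) x := fun x hx =>
    (hasDerivAt_IccExtend_linearODESolution h (companion b q) (0, 1) hx).congr_deriv
      (companion_apply_apply b q _ _)
  have hl : y l = (0, 1) := (IccExtend_left h _).trans (linearODESolution_left h _ _)
  refine ⟨fun x => (y x).1, fun x => (y x).2, ⟨hc.fst.continuousOn, hc.snd.continuousOn,
    fun x hx => (hderiv x hx).fst, fun x hx => (hderiv x hx).snd, congrArg Prod.fst hl, ?_⟩,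
    congrArg Prod.snd hl⟩
  rwa [hy, IccExtend_right]

theorem IsDirichletSolution.deriv_left_eq_zero_of_eqOn_zero (hlu : l < u)
    (hg : IsDirichletSolution h b q g g') (hzero : EqOn g 0 (Icc l u)) : g' l = 0 := by
  have hinterior : EqOn g' 0 (Ioo l u) := fun x hx => by
    have hloc : g =ᶠ[nhds x] fun _ => 0 := by
      filter_upwards [Icc_mem_nhds hx.1 hx.2] with t ht using hzero ht
    exact (hg.hasDerivAt x hx).unique ((hasDerivAt_const x 0).congr_of_eventuallyEq hloc)
  exact hinterior.of_subset_closure hg.continuousOn_deriv continuousOn_const Ioo_subset_Icc_self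
    (closure_Ioo hlu.ne).ge (left_mem_Icc.2 h)

end Dirichlet

theorem eqOn_zero_of_inner_add_norm_sq_pos {E : Type*} [NormedAddCommGroup E]
    [InnerProductSpace ℝ E] {l u : ℝ} {g g' g'' : ℝ → E} (hg : ContinuousOn g (Icc l u))
    (hg' : ContinuousOn g' (Icc l u)) (hderiv : ∀ x ∈ Ioo l u, HasDerivAt g (g' x) x)
    (hderiv' : ∀ x ∈ Ioo l u, HasDerivAt g' (g'' x) x)
    (hpos : ∀ x ∈ Ioo l u, g x ≠ 0 → 0 < inner ℝ (g x) (g'' x) + ‖g' x‖ ^ 2)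
    (hl : g l = 0) (hu : g u = 0) : EqOn g 0 (Icc l u) := by
  let φ : ℝ → ℝ := fun x => inner ℝ (g x) (g' x)
  have hφ : ∀ x ∈ Ioo l u, HasDerivAt φ (inner ℝ (g x) (g'' x) + ‖g' x‖ ^ 2) x := fun x hx => by
    simpa only [real_inner_self_eq_norm_sq] using (hderiv x hx).inner ℝ (hderiv' x hx)
  have hnonneg : ∀ x ∈ Ioo l u, 0 ≤ inner ℝ (g x) (g'' x) + ‖g' x‖ ^ 2 := fun x hx => by
    by_cases h0 : g x = 0
    · simp [h0]
    · exact (hpos x hx h0).le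
  have hmono : MonotoneOn φ (Icc l u) :=
    monotoneOn_of_hasDerivWithinAt_nonneg (convex_Icc l u) (hg.inner hg')
      (fun x hx => (hφ x (interior_Icc (a := l) ▸ hx)).hasDerivWithinAt)
      fun x hx => hnonneg x (interior_Icc (a := l) ▸ hx)
  have hφ0 : ∀ x ∈ Icc l u, φ x = 0 := fun x hx => by
    have hlu : l ≤ u := hx.1.trans hx.2
    refine le_antisymm ?_ ?_
    · simpa [φ, hu] using hmono hx (right_mem_Icc.2 hlu) hx.2
    · simpa [φ, hl] using hmono (left_mem_Icc.2 hlu) hx hx.1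
  intro x hx
  rcases hx.1.eq_or_lt with rfl | hlx
  · exact hl
  rcases hx.2.eq_or_lt with rfl | hxu
  · exact hu
  by_contra hgx
  have hloc : φ =ᶠ[nhds x] fun _ => 0 := by
    filter_upwards [Icc_mem_nhds hlx hxu] with t ht using hφ0 t ht
  exact (hpos x ⟨hlx, hxu⟩ hgx).ne'
    ((hφ x ⟨hlx, hxu⟩).unique ((hasDerivAt_const x 0).congr_of_eventuallyEq hloc))

theorem inner_neg_add_norm_sq_pos {b q v v' : ℂ} (hbq : ‖b‖ ^ 2 < -4 * q.re) (hv : v ≠ 0) :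
    0 < inner ℝ v (-(b * v' + q * v)) + ‖v'‖ ^ 2 := by
  have hq : inner ℝ v (q * v) = q.re * ‖v‖ ^ 2 := by
    rw [Complex.inner, mul_assoc, Complex.mul_conj, Complex.normSq_eq_norm_sq,
      Complex.re_mul_ofReal]
  have hb : inner ℝ v (b * v') ≤ ‖v‖ * (‖b‖ * ‖v'‖) := by
    simpa only [norm_mul] using real_inner_le_norm v (b * v')
  rw [inner_neg_right, inner_add_right, hq]
  calc 0 < (‖v'‖ - ‖b‖ * ‖v‖ / 2) ^ 2 + (-4 * q.re - ‖b‖ ^ 2) / 4 * ‖v‖ ^ 2 := by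
        have := sub_pos.2 hbq
        positivity
    _ = -(‖v‖ * (‖b‖ * ‖v'‖) + q.re * ‖v‖ ^ 2) + ‖v'‖ ^ 2 := by ring
    _ ≤ -(inner ℝ v (b * v') + q.re * ‖v‖ ^ 2) + ‖v'‖ ^ 2 := by gcongr

theorem dirichletDet_ne_zero {l u : ℝ} (hlu : l < u) {b q : C(Icc l u, ℂ)}
    (hbq : ∀ x, ‖b x‖ ^ 2 < -4 * (q x).re) : dirichletDet hlu.le b q ≠ 0 := by
  intro hdet
  obtain ⟨g, g', hg, hg'l⟩ := exists_isDirichletSolution_of_dirichletDet_eq_zero hdet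
  have hzero : EqOn g 0 (Icc l u) :=
    eqOn_zero_of_inner_add_norm_sq_pos hg.continuousOn hg.continuousOn_deriv hg.hasDerivAt
      hg.hasDerivAt_deriv (fun x _ hgx => inner_neg_add_norm_sq_pos (hbq _) hgx)
      hg.left_eq_zero hg.right_eq_zero
  exact one_ne_zero (hg'l.symm.trans (hg.deriv_left_eq_zero_of_eqOn_zero hlu hzero))

theorem re_sq_mul_le (ζ z : ℂ) :
    (ζ ^ 2 * z).re ≤ -(ζ.im ^ 2 * z.re) + (ζ.re ^ 2 + 2 * |ζ.re| * |ζ.im|) * ‖z‖ := by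
  have hsplit : ζ ^ 2 * z = -((ζ.im ^ 2 : ℝ) * z) + (ζ.re ^ 2 + 2 * ζ.re * ζ.im * .I) * z := by
    nth_rw 1 [← Complex.re_add_im ζ]
    linear_combination (norm := (push_cast; ring1)) (ζ.im ^ 2 * z) * Complex.I_sq
  have hnorm : ‖(ζ.re ^ 2 + 2 * ζ.re * ζ.im * .I : ℂ)‖ ≤ ζ.re ^ 2 + 2 * |ζ.re| * |ζ.im| :=
    (norm_add_le _ _).trans_eq (by simp)
  rw [hsplit, Complex.add_re, Complex.neg_re, Complex.re_ofReal_mul]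
  gcongr
  refine (Complex.re_le_norm _).trans ?_
  rw [norm_mul]
  gcongr

theorem exists_re_quadraticPencil_lt {X : Type*} [TopologicalSpace X] [CompactSpace X]
    {p₂ : C(X, ℂ)} (hp₂ : ∀ x, 0 < (p₂ x).re) (p₁ p₀ : C(X, ℂ)) (S c : ℝ) :
    ∃ M, ∀ ζ : ℂ, |ζ.re| ≤ S → M < |ζ.im| → ∀ x, ((ζ ^ 2 • p₂ + ζ • p₁ + p₀) x).re < c := by
  obtain ⟨m, hm, hmp⟩ : ∃ m, 0 < m ∧ ∀ x, m ≤ (p₂ x).re := by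
    simpa using isCompact_univ.exists_forall_le' (f := fun x => (p₂ x).re)
      (by fun_prop) fun x _ => hp₂ x
  obtain ⟨M, hM⟩ : ∃ M, ∀ t > M, S ^ 2 * ‖p₂‖ + S * ‖p₁‖ + ‖p₀‖ - c
      < t * (t * m - (2 * S * ‖p₂‖ + ‖p₁‖)) := by
    have hlin : Filter.Tendsto (fun t => t * m - (2 * S * ‖p₂‖ + ‖p₁‖)) .atTop .atTop :=
      Filter.tendsto_atTop_add_const_right _ _ (Filter.tendsto_id.atTop_mul_const hm)
    obtain ⟨M, hM⟩ := Filter.eventually_atTop.1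
      ((Filter.tendsto_id.atTop_mul_atTop₀ hlin).eventually_gt_atTop _)
    exact ⟨M, fun t ht => hM t ht.le⟩
  refine ⟨M, fun ζ hS hζ x => ?_⟩
  have hS0 : 0 ≤ S := (abs_nonneg _).trans hS
  have h₂ : (ζ ^ 2 * p₂ x).re ≤ -(|ζ.im| ^ 2 * m) + (S ^ 2 + 2 * S * |ζ.im|) * ‖p₂‖ := by
    refine (re_sq_mul_le ζ (p₂ x)).trans ?_
    rw [sq_abs, ← sq_abs ζ.re]
    gcongr
    · exact hmp x
    · exact p₂.norm_coe_le_norm x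
  have h₁ : (ζ * p₁ x).re ≤ (S + |ζ.im|) * ‖p₁‖ := by
    refine (Complex.re_le_norm _).trans ?_
    rw [norm_mul]
    gcongr
    · exact (Complex.norm_le_abs_re_add_abs_im ζ).trans (by gcongr)
    · exact p₁.norm_coe_le_norm x
  have h₀ : (p₀ x).re ≤ ‖p₀‖ := (Complex.re_le_norm _).trans (p₀.norm_coe_le_norm x)
  calc ((ζ ^ 2 • p₂ + ζ • p₁ + p₀) x).re = (ζ ^ 2 * p₂ x).re + (ζ * p₁ x).re + (p₀ x).re := by simp
    _ ≤ -(|ζ.im| ^ 2 * m) + (S ^ 2 + 2 * S * |ζ.im|) * ‖p₂‖ + (S + |ζ.im|) * ‖p₁‖ + ‖p₀‖ := by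
        gcongr
    _ < c := by linear_combination hM |ζ.im| hζ

theorem finite_setOf_dirichletDet_quadraticPencil_eq_zero {l u : ℝ} (hlu : l < u)
    (b : C(Icc l u, ℂ)) {p₂ : C(Icc l u, ℂ)} (hp₂ : ∀ x, 0 < (p₂ x).re) (p₁ p₀ : C(Icc l u, ℂ))
    (S : ℝ) :
    {ζ : ℂ | |ζ.re| ≤ S ∧ dirichletDet hlu.le b (ζ ^ 2 • p₂ + ζ • p₁ + p₀) = 0}.Finite := by
  rcases lt_or_ge S 0 with hS | hS
  · exact finite_empty.subset fun ζ hζ => (hζ.1.trans_lt hS).not_ge (abs_nonneg _)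
  let D : ℂ → ℂ := fun ζ => dirichletDet hlu.le b (ζ ^ 2 • p₂ + ζ • p₁ + p₀)
  have hD : Differentiable ℂ D := (differentiable_dirichletDet hlu.le b).comp (by fun_prop)
  obtain ⟨M, hM⟩ := exists_re_quadraticPencil_lt hp₂ p₁ p₀ S (-‖b‖ ^ 2 / 4)
  have hne : ∀ ζ : ℂ, |ζ.re| ≤ S → M < |ζ.im| → D ζ ≠ 0 := fun ζ hre him =>
    dirichletDet_ne_zero hlu fun x => by
      have hb : ‖b x‖ ^ 2 ≤ ‖b‖ ^ 2 := by
        gcongr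
        exact b.norm_coe_le_norm x
      linarith [hM ζ hre him x]
  have hz : D ⟨0, |M| + 1⟩ ≠ 0 := by
    refine hne _ (by simpa) ?_
    rw [abs_of_pos (by positivity)]
    exact (le_abs_self M).trans_lt (lt_add_one _)
  have hcodiscrete :=
    (hD.differentiableOn.analyticOnNhd isOpen_univ).preimage_zero_mem_codiscrete hz
  have hcompact : IsCompact (Icc (-S) S ×ℂ Icc (-M) M) := isCompact_Icc.reProdIm isCompact_Icc
  refine (hcompact.finite_sdiff_of_mem_codiscreteWithin
    (Filter.codiscreteWithin_mono (subset_univ _) hcodiscrete)).subset fun ζ hζ => ⟨?_, ?_⟩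
  · exact ⟨abs_le.1 hζ.1, abs_le.1 (not_lt.1 fun him => hne ζ hζ.1 him hζ.2)⟩
  · simpa using hζ.2

theorem dirichletDet_eq_zero_of_mem_frakS {r : ℝ} (hr : -r ≤ r) {a : ℝ → ℝ} {β₁ β₂ β₃ : ℝ → ℂ}
    {ζ : ℂ} (hζ : ζ ∈ frakS r a β₁ β₂ β₃) {b q : C(Icc (-r) r, ℂ)}
    (hb : ∀ x, b x = β₁ x + β₂ x)
    (hq : ∀ x : Icc (-r) r, q x = ζ ^ 2 * (a x : ℂ) ^ 2 - Complex.I * ζ * (deriv a x : ℝ)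
      + Complex.I * ζ * a x * (β₁ x - β₂ x) + β₃ x) :
    dirichletDet hr b q = 0 := by
  obtain ⟨g, hg, ⟨x, hx, hgx⟩, hode, hl, hu⟩ := hζ
  have hg' : ContDiff ℝ 1 (deriv g) := (contDiff_succ_iff_deriv (n := 1)).1 hg |>.2.2
  refine IsDirichletSolution.dirichletDet_eq_zero (g' := deriv g) ⟨hg.continuous.continuousOn,
    hg'.continuous.continuousOn, fun t _ => (hg.differentiable two_ne_zero t).hasDerivAt,
    fun t ht => ?_, hl, hu⟩ hx hgx
  have ht' := Ioo_subset_Icc_self ht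
  refine (hg'.differentiable one_ne_zero t).hasDerivAt.congr_deriv ?_
  rw [IccExtend_of_mem hr b ht', IccExtend_of_mem hr q ht', hb, hq]
  have hodet := hode t ht'
  rw [Hop] at hodet
  linear_combination hodet

theorem exceptional_set_finite_general {r : ℝ} (hr : 0 < r) {a : ℝ → ℝ} (ha : ContDiff ℝ 1 a)
    (ha0 : ∀ x ∈ Icc (-r) r, a x ≠ 0) {β₁ β₂ β₃ : ℝ → ℂ} (hβ₁ : Continuous β₁)
    (hβ₂ : Continuous β₂) (hβ₃ : Continuous β₃) {K : Set ℝ} (hK : Bornology.IsBounded K) :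
    {ζ ∈ frakS r a β₁ β₂ β₃ | ζ.re + 1 / 2 ∈ K}.Finite := by
  have : Continuous (deriv a) := ha.continuous_deriv le_rfl
  let b : C(Icc (-r) r, ℂ) := ⟨fun x => β₁ x + β₂ x, by fun_prop⟩
  let p₂ : C(Icc (-r) r, ℂ) := ⟨fun x => ((a x ^ 2 : ℝ) : ℂ), by fun_prop⟩
  let p₁ : C(Icc (-r) r, ℂ) :=
    ⟨fun x => Complex.I * (a x * (β₁ x - β₂ x) - (deriv a x : ℝ)), by fun_prop⟩
  let p₀ : C(Icc (-r) r, ℂ) := ⟨fun x => β₃ x, by fun_prop⟩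
  have hp₂ : ∀ x, 0 < (p₂ x).re := fun x => by
    have := ha0 x x.2
    exact (Complex.ofReal_re _).symm ▸ by positivity
  obtain ⟨R, hR⟩ := hK.exists_norm_le
  refine (finite_setOf_dirichletDet_quadraticPencil_eq_zero (neg_lt_self hr) b hp₂ p₁ p₀
    (R + 1 / 2)).subset fun ζ ⟨hζ, hζK⟩ => ⟨?_, ?_⟩
  · calc |ζ.re| = |ζ.re + 1 / 2 - 1 / 2| := by rw [add_sub_cancel_right]
      _ ≤ |ζ.re + 1 / 2| + |1 / 2| := abs_sub _ _
      _ ≤ R + 1 / 2 := by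
          rw [abs_of_pos (one_half_pos (α := ℝ))]
          gcongr
          exact hR _ hζK
  · refine dirichletDet_eq_zero_of_mem_frakS _ hζ (fun _ => rfl) fun x => ?_
    simp only [Complex.ofReal_pow, ContinuousMap.add_apply, ContinuousMap.coe_smul,
      ContinuousMap.coe_mk, Pi.smul_apply, smul_eq_mul, add_left_inj, p₂, p₁, p₀]
    ring

/-- For every compact `K ⊆ [0,∞)`, the set of `s ∈ K` such that `s - 1/2 + iγ ∈ 𝔖`
for some `γ ∈ ℝ` is finite. -/
theorem exceptional_set_finite (r : ℝ) (hr : 0 < r) (a : ℝ → ℝ) (ha : ContDiff ℝ (⊤ : ℕ∞) a)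
    (ha0 : ∀ x ∈ Icc (-r) r, a x ≠ 0)
    (β₁ β₂ β₃ : ℝ → ℂ) (hβ₁ : ContDiff ℝ (⊤ : ℕ∞) β₁) (hβ₂ : ContDiff ℝ (⊤ : ℕ∞) β₂)
    (hβ₃ : ContDiff ℝ (⊤ : ℕ∞) β₃)
    (K : Set ℝ) (hK : IsCompact K) (hK0 : K ⊆ Ici 0) :
    {s ∈ K | ∃ γ : ℝ, Complex.mk (s - 1/2) γ ∈ frakS r a β₁ β₂ β₃}.Finite := by
  refine ((exceptional_set_finite_general hr (ha.of_le (by simp)) ha0 hβ₁.continuous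
    hβ₂.continuous hβ₃.continuous hK.isBounded).image fun ζ => ζ.re + 1 / 2).subset ?_
  rintro s ⟨hs, γ, hγ⟩
  exact ⟨⟨s - 1 / 2, γ⟩, ⟨hγ, by simpa using hs⟩, by simp⟩
end
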